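/- The homogeneous linear spaces are exactly: the trivial spaces (all lines have two points), the single lines (all points collinear), the Fano plane PG(2,2), and the projective plane PG(2,3). -/

import Mathlib

open Set Function

universe u v w

/-- A linear space: a set of points with a family of lines, each line having at
least 2 points, such that any two distinct points lie on a common line and any
two distinct lines meet in at most one point. -/
structure LinSpace (X : Type u) where
  lines : Set (Set X)
  two_le : ∀ L ∈ lines, 2 ≤ L.encard
  exists_line : ∀ x y : X, x ≠ y → ∃ L ∈ lines, x ∈ L ∧ y ∈ L
  inter_subsingleton : ∀ L₁ ∈ lines, ∀ L₂ ∈ lines, L₁ ≠ L₂ → (L₁ ∩ L₂).Subsingleton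

/-- Collinearity of three points. -/
def Collin {X : Type u} (A : LinSpace X) (x y z : X) : Prop :=
  ∃ L ∈ A.lines, x ∈ L ∧ y ∈ L ∧ z ∈ L

/-- An embedding of linear spaces: an injection preserving and reflecting collinearity. -/
def IsEmbedding {X : Type u} {Y : Type v} (A : LinSpace X) (B : LinSpace Y) (f : X → Y) : Prop :=
  Function.Injective f ∧ ∀ x y z : X, Collin A x y z ↔ Collin B (f x) (f y) (f z)

/-- The linear space has degree at most `n`: every line has at most `n` points
and every point lies on at most `n` lines. -/
def DegLE {X : Type u} (A : LinSpace X) (n : ℕ) : Prop :=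
  (∀ L ∈ A.lines, L.encard ≤ (n : ℕ∞)) ∧
  ∀ p : X, {L | L ∈ A.lines ∧ p ∈ L}.encard ≤ (n : ℕ∞)

/-- There exist four points, no three of which are collinear. -/
def FourIndep {X : Type u} (A : LinSpace X) : Prop :=
  ∃ a b c d : X, a ≠ b ∧ a ≠ c ∧ a ≠ d ∧ b ≠ c ∧ b ≠ d ∧ c ≠ d ∧
    ∀ p q r : X, p ∈ ({a, b, c, d} : Set X) → q ∈ ({a, b, c, d} : Set X) →
      r ∈ ({a, b, c, d} : Set X) → p ≠ q → p ≠ r → q ≠ r → ¬ Collin A p q r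

/-- A projective plane: every two lines intersect, and there are four points no
three of which are collinear. -/
def IsProjPlane {X : Type u} (A : LinSpace X) : Prop :=
  (∀ L₁ ∈ A.lines, ∀ L₂ ∈ A.lines, (L₁ ∩ L₂).Nonempty) ∧ FourIndep A

/-- An automorphism of a linear space. -/
def IsAuto {X : Type u} (A : LinSpace X) (g : X → X) : Prop :=
  Function.Bijective g ∧ ∀ x y z : X, Collin A x y z ↔ Collin A (g x) (g y) (g z)

/-- A homogeneous linear space: every isomorphism between finite subspaces
extends to an automorphism. -/
def Homogeneous {X : Type u} (A : LinSpace X) : Prop :=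
  ∀ S : Set X, S.Finite → ∀ f : X → X, Set.InjOn f S →
    (∀ x ∈ S, ∀ y ∈ S, ∀ z ∈ S, (Collin A x y z ↔ Collin A (f x) (f y) (f z))) →
    ∃ g : X → X, IsAuto A g ∧ ∀ x ∈ S, g x = f x

/-- The Fano plane: the unique projective plane of order 2 (7 points, every line
has exactly 3 points). -/
def IsFano {X : Type u} (A : LinSpace X) : Prop :=
  IsProjPlane A ∧ (∀ L ∈ A.lines, L.encard = 3) ∧ (Set.univ : Set X).encard = 7

/-- The projective plane over F₃: the unique projective plane of order 3
(13 points, every line has exactly 4 points). -/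
def IsPG2_3 {X : Type u} (A : LinSpace X) : Prop :=
  IsProjPlane A ∧ (∀ L ∈ A.lines, L.encard = 4) ∧ (Set.univ : Set X).encard = 13

/-- The planar closure of a set `S` in a linear space `B`: the closure of `S`
under adding intersection points of pairs of lines spanned by the closure. -/
inductive PlanarCl {Y : Type v} (B : LinSpace Y) (S : Set Y) : Y → Prop
  | base {p : Y} (hp : p ∈ S) : PlanarCl B S p
  | inter {p : Y} (L₁ L₂ : Set Y) (p₁ q₁ p₂ q₂ : Y)
      (hL₁ : L₁ ∈ B.lines) (hL₂ : L₂ ∈ B.lines) (hne : L₁ ≠ L₂)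
      (hpq₁ : p₁ ≠ q₁) (hp₁ : p₁ ∈ L₁) (hq₁ : q₁ ∈ L₁)
      (hpq₂ : p₂ ≠ q₂) (hp₂ : p₂ ∈ L₂) (hq₂ : q₂ ∈ L₂)
      (cp₁ : PlanarCl B S p₁) (cq₁ : PlanarCl B S q₁)
      (cp₂ : PlanarCl B S p₂) (cq₂ : PlanarCl B S q₂)
      (hpL₁ : p ∈ L₁) (hpL₂ : p ∈ L₂) : PlanarCl B S p

/-- A planarisation: an embedding such that every point of the target lies in
the planar closure of the image (i.e. the target is obtained by successively
adding intersection points of pairs of lines). -/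
def IsPlanarisation {X : Type u} {Y : Type v} (A : LinSpace X) (B : LinSpace Y) (f : X → Y) : Prop :=
  IsEmbedding A B f ∧ ∀ y : Y, PlanarCl B (Set.range f) y

/-- An aplanar embedding: any two lines of `A` whose images intersect in `B`
already intersect in `A`. -/
def IsAplanar {X : Type u} {Y : Type v} (A : LinSpace X) (B : LinSpace Y) (f : X → Y) : Prop :=
  IsEmbedding A B f ∧
  ∀ L₁ ∈ A.lines, ∀ L₂ ∈ A.lines, ∀ M₁ ∈ B.lines, ∀ M₂ ∈ B.lines,
    f '' L₁ ⊆ M₁ → f '' L₂ ⊆ M₂ → (M₁ ∩ M₂).Nonempty → (L₁ ∩ L₂).Nonempty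

/-- The induced subspace on the set `S` of points of `B` is a projective plane:
any two induced lines (lines of `B` meeting `S` in at least two points) meet
inside `S`, and `S` contains four points no three collinear. -/
def IsProjPlaneOn {Y : Type v} (B : LinSpace Y) (S : Set Y) : Prop :=
  (∀ L₁ ∈ B.lines, ∀ L₂ ∈ B.lines,
      2 ≤ (L₁ ∩ S).encard → 2 ≤ (L₂ ∩ S).encard → (L₁ ∩ L₂ ∩ S).Nonempty) ∧
  ∃ a b c d : Y, a ∈ S ∧ b ∈ S ∧ c ∈ S ∧ d ∈ S ∧
    a ≠ b ∧ a ≠ c ∧ a ≠ d ∧ b ≠ c ∧ b ≠ d ∧ c ≠ d ∧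
    ∀ p q r : Y, p ∈ ({a, b, c, d} : Set Y) → q ∈ ({a, b, c, d} : Set Y) →
      r ∈ ({a, b, c, d} : Set Y) → p ≠ q → p ≠ r → q ≠ r → ¬ Collin B p q r

/-!
In a homogeneous space all lines have the same size. Suppose that they have more than two points and
that not all points are collinear. Then two lines meeting in a point carry a frame: four points, no
three of which are collinear. Any two frames are related by an automorphism, so the opposite sides
of every frame meet, and hence any two lines meet. Let `e`, `p`, `q` be the three diagonal points of
a frame `v`, with `e` on the side `v 0, v 1`. Each point of this side other than `e`, `v 0` and
`v 1` is shown by a symmetry of the frame to lie on the line `p q`; therefore a line has at most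
four points.

Conversely, in a projective plane with three or four points on each line every point lies on a side
of a given frame and is determined by the set of sides through it. The lines are determined
combinatorially by these sets as well, so that every isomorphism between subspaces containing a
frame extends. A subspace without a frame lies in the union of a line and a point, and an
isomorphism between two such subspaces is first extended to the line and then to a frame.
-/

section SetLemmas

variable {α β : Type*} {s t : Set α}

theorem exists_perm_eqOn {f : α → α} (hs : s.Finite) (hf : Set.InjOn f s) :
    ∃ g : Equiv.Perm α, Set.EqOn g f s := by
  have : Finite s := hs
  obtain ⟨g, hg⟩ := Equiv.Perm.exists_smul_eq_embedding (Function.Embedding.subtype (· ∈ s))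
    ⟨s.domRestrict f, hf.injective⟩
  exact ⟨g, fun x hx => DFunLike.congr_fun hg ⟨x, hx⟩⟩

theorem exists_injOn_eqOn {f : α → β} {u : Set β} (ht : t.Finite) (htu : t.encard ≤ u.encard)
    (hst : s ⊆ t) (hf : Set.InjOn f s) (hfs : Set.MapsTo f s u) :
    ∃ g, Set.InjOn g t ∧ Set.MapsTo g t u ∧ Set.EqOn g f s := by
  classical
  rcases isEmpty_or_nonempty β with hβ | hβ
  · rw [Set.eq_empty_of_isEmpty u, Set.encard_empty, nonpos_iff_eq_zero, Set.encard_eq_zero] at htu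
    subst htu
    exact ⟨f, Set.injOn_empty f, Set.mapsTo_empty f u, fun _ _ => rfl⟩
  have hle : (t \ s).encard ≤ (u \ f '' s).encard := by
    rw [← ENat.add_le_add_iff_right (Set.encard_ne_top_iff.2 (ht.subset hst)),
      Set.encard_sdiff_add_encard_of_subset hst, ← hf.encard_image,
      Set.encard_sdiff_add_encard_of_subset hfs.image_subset]
    exact htu
  obtain ⟨h, hh, hinj⟩ := ht.sdiff.exists_injOn_of_encard_le hle
  refine ⟨s.piecewise f h, ?_, fun x hx => ?_, s.piecewise_eqOn f h⟩
  · rw [← Set.union_sdiff_cancel hst]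
    refine (Set.injOn_union Set.disjoint_sdiff_right).2 ⟨?_, ?_, fun x hx y hy hxy => ?_⟩
    · exact hf.congr (s.piecewise_eqOn f h).symm
    · exact hinj.congr fun x hx => (s.piecewise_eq_of_notMem f h hx.2).symm
    · rw [s.piecewise_eq_of_mem f h hx, s.piecewise_eq_of_notMem f h hy.2] at hxy
      exact (hh hy).2 ⟨x, hx, hxy⟩
  · by_cases hxs : x ∈ s
    · exact s.piecewise_eq_of_mem f h hxs ▸ hfs hxs
    · exact s.piecewise_eq_of_notMem f h hxs ▸ (hh ⟨hx, hxs⟩).1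

theorem exists_pair_mem_ne (hs : 2 < s.encard) (x : α) :
    ∃ y ∈ s, ∃ z ∈ s, y ≠ z ∧ y ≠ x ∧ z ≠ x := by
  have : 1 < (s \ {x}).encard := by
    by_contra! h
    have := (Set.encard_le_encard_sdiff_add_encard s {x}).trans (add_le_add_left h _)
    rw [Set.encard_singleton] at this
    exact absurd this (not_le.2 (by norm_num; exact hs))
  obtain ⟨y, z, hy, hz, hyz⟩ := Set.one_lt_encard_iff.1 this
  exact ⟨y, hy.1, z, hz.1, hyz, hy.2, hz.2⟩

theorem exists_mem_ne_ne (hs : 2 < s.encard) (x y : α) : ∃ z ∈ s, z ≠ x ∧ z ≠ y := by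
  obtain ⟨p, hp, q, hq, hpq, hpx, hqx⟩ := exists_pair_mem_ne hs x
  by_cases hpy : p = y
  · exact ⟨q, hq, hqx, fun hqy => hpq (hpy.trans hqy.symm)⟩
  · exact ⟨p, hp, hpx, hpy⟩

end SetLemmas

variable {X : Type*} {A : LinSpace X}

namespace LinSpace

section Incidence

variable {x y z : X} {L M : Set X}

theorem line_unique (hxy : x ≠ y) (hL : L ∈ A.lines) (hM : M ∈ A.lines)
    (hxL : x ∈ L) (hyL : y ∈ L) (hxM : x ∈ M) (hyM : y ∈ M) : L = M := by
  by_contra hne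
  exact hxy (A.inter_subsingleton L hL M hM hne ⟨hxL, hxM⟩ ⟨hyL, hyM⟩)

theorem collin_iff_mem (hxy : x ≠ y) (hL : L ∈ A.lines) (hx : x ∈ L) (hy : y ∈ L) :
    Collin A x y z ↔ z ∈ L := by
  refine ⟨?_, fun hz => ⟨L, hL, hx, hy, hz⟩⟩
  rintro ⟨M, hM, hxM, hyM, hzM⟩
  rwa [line_unique hxy hL hM hx hy hxM hyM]

theorem _root_.Collin.swap (h : Collin A x y z) : Collin A y x z := by
  obtain ⟨L, hL, hx, hy, hz⟩ := h
  exact ⟨L, hL, hy, hx, hz⟩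

theorem _root_.Collin.rotate (h : Collin A x y z) : Collin A y z x := by
  obtain ⟨L, hL, hx, hy, hz⟩ := h
  exact ⟨L, hL, hy, hz, hx⟩

theorem collin_of_eq [Nontrivial X] (h : x = y ∨ y = z ∨ x = z) : Collin A x y z := by
  have key (p q : X) : ∃ L ∈ A.lines, p ∈ L ∧ q ∈ L := by
    obtain ⟨r, hr⟩ := exists_ne p
    rcases eq_or_ne p q with rfl | hpq
    · obtain ⟨L, hL, hp, -⟩ := A.exists_line p r hr.symm
      exact ⟨L, hL, hp, hp⟩
    · exact A.exists_line p q hpq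
  obtain ⟨L, hL, hx, hz⟩ := key x z
  obtain ⟨M, hM, hx', hy'⟩ := key x y
  rcases h with rfl | rfl | rfl
  exacts [⟨L, hL, hx, hx, hz⟩, ⟨L, hL, hx, hz, hz⟩, ⟨M, hM, hx', hy', hx'⟩]

theorem exists_pair_mem (hL : L ∈ A.lines) : ∃ x ∈ L, ∃ y ∈ L, x ≠ y := by
  obtain ⟨x, y, hx, hy, hxy⟩ :=
    Set.one_lt_encard_iff.1 (lt_of_lt_of_le (by norm_num) (A.two_le L hL) : 1 < L.encard)
  exact ⟨x, hx, y, hy, hxy⟩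

theorem exists_line_through_of_notMem (hL : L ∈ A.lines) (hx : x ∉ L) (hy : y ∈ L) :
    ∃ M ∈ A.lines, x ∈ M ∧ ∀ z ∈ L, z ∈ M ↔ z = y := by
  obtain ⟨M, hM, hxM, hyM⟩ := A.exists_line x y (ne_of_mem_of_not_mem hy hx).symm
  refine ⟨M, hM, hxM, fun z hz => ⟨fun hzM => ?_, fun hzy => hzy ▸ hyM⟩⟩
  exact A.inter_subsingleton L hL M hM (fun hLM => hx (hLM ▸ hxM)) ⟨hz, hzM⟩ ⟨hy, hyM⟩

-- By the pigeonhole principle, two of the three points lie on `L` or two lie on `M`.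
theorem collin_iff_of_mem_union (hL : L ∈ A.lines) (hM : M ∈ A.lines) (hx : x ∈ L ∪ M)
    (hy : y ∈ L ∪ M) (hz : z ∈ L ∪ M) :
    Collin A x y z ↔
      (x = y ∨ y = z ∨ x = z) ∨ (x ∈ L ∧ y ∈ L ∧ z ∈ L) ∨ (x ∈ M ∧ y ∈ M ∧ z ∈ M) := by
  have : Nontrivial X := by
    obtain ⟨p, -, q, -, hpq⟩ := exists_pair_mem hL
    exact ⟨p, q, hpq⟩
  refine ⟨fun h => or_iff_not_imp_left.2 fun hne => ?_, ?_⟩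
  · push Not at hne
    obtain ⟨hxy, hyz, hxz⟩ := hne
    have hz {K} (hK : K ∈ A.lines) (hx : x ∈ K) (hy : y ∈ K) := (collin_iff_mem hxy hK hx hy).1 h
    have hx {K} (hK : K ∈ A.lines) (hy : y ∈ K) (hz : z ∈ K) :=
      (collin_iff_mem hyz hK hy hz).1 h.rotate
    have hy {K} (hK : K ∈ A.lines) (hx : x ∈ K) (hz : z ∈ K) :=
      (collin_iff_mem hxz hK hx hz).1 h.rotate.swap.rotate.rotate
    grind
  · rintro (h | ⟨hx, hy, hz⟩ | ⟨hx, hy, hz⟩)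
    exacts [collin_of_eq h, ⟨L, hL, hx, hy, hz⟩, ⟨M, hM, hx, hy, hz⟩]

end Incidence

section PartialIso

variable {f : X → X} {S L M L' M' : Set X} {c d : X}

/-- `f` restricts to an isomorphism from the subspace on `S` onto the subspace on `f '' S`. -/
def IsPartialIso (A : LinSpace X) (f : X → X) (S : Set X) : Prop :=
  Set.InjOn f S ∧
    ∀ x ∈ S, ∀ y ∈ S, ∀ z ∈ S, (Collin A x y z ↔ Collin A (f x) (f y) (f z))

theorem _root_.Homogeneous.exists_auto (H : Homogeneous A) (hS : S.Finite)
    (hf : IsPartialIso A f S) : ∃ g, IsAuto A g ∧ Set.EqOn g f S :=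
  H S hS f hf.1 hf.2

theorem isPartialIso_of_subset_union (hL : L ∈ A.lines) (hM : M ∈ A.lines) (hL' : L' ∈ A.lines)
    (hM' : M' ∈ A.lines) (hS : S ⊆ L ∪ M) (hf : Set.InjOn f S)
    (hfL : ∀ x ∈ S, (f x ∈ L' ↔ x ∈ L)) (hfM : ∀ x ∈ S, (f x ∈ M' ↔ x ∈ M)) :
    IsPartialIso A f S := by
  have hfS x (hx : x ∈ S) : f x ∈ L' ∪ M' := (hS hx).imp (hfL x hx).2 (hfM x hx).2
  refine ⟨hf, fun x hx y hy z hz => ?_⟩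
  rw [collin_iff_of_mem_union hL hM (hS hx) (hS hy) (hS hz),
    collin_iff_of_mem_union hL' hM' (hfS x hx) (hfS y hy) (hfS z hz), hfL x hx, hfL y hy, hfL z hz,
    hfM x hx, hfM y hy, hfM z hz, hf.eq_iff hx hy, hf.eq_iff hy hz, hf.eq_iff hx hz]

theorem isPartialIso_union_pair (hL : L ∈ A.lines) (hM : M ∈ A.lines) (hL' : L' ∈ A.lines)
    (hM' : M' ∈ A.lines) (hf : Set.InjOn f L) (hfL : Set.MapsTo f L L')
    (hfM : ∀ x ∈ L, f x ∈ M' ↔ x ∈ M) (hc : c ∈ M \ L) (hd : d ∈ M \ L) (hfc : f c ∈ M' \ L')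
    (hfd : f d ∈ M' \ L') (hcd : f c ≠ f d) : IsPartialIso A f (L ∪ {c, d}) := by
  refine isPartialIso_of_subset_union hL hM hL' hM' ?_ ?_ ?_ ?_
  · rintro x (hx | rfl | rfl)
    exacts [.inl hx, .inr hc.1, .inr hd.1]
  · rintro x (hx | rfl | rfl) y (hy | rfl | rfl) hxy
    · exact hf hx hy hxy
    · exact (hfc.2 (hxy ▸ hfL hx)).elim
    · exact (hfd.2 (hxy ▸ hfL hx)).elim
    · exact (hfc.2 (hxy ▸ hfL hy)).elim
    · rfl
    · exact (hcd hxy).elim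
    · exact (hfd.2 (hxy ▸ hfL hy)).elim
    · exact (hcd hxy.symm).elim
    · rfl
  · rintro x (hx | rfl | rfl)
    exacts [iff_of_true (hfL hx) hx, iff_of_false hfc.2 hc.2, iff_of_false hfd.2 hd.2]
  · rintro x (hx | rfl | rfl)
    exacts [hfM x hx, iff_of_true hfc.1 hc.1, iff_of_true hfd.1 hd.1]

theorem isPartialIso_pair [Nontrivial X] (hf : Function.Injective f) (x y : X) :
    IsPartialIso A f {x, y} := by
  have heq : ∀ p ∈ ({x, y} : Set X), ∀ q ∈ ({x, y} : Set X), ∀ r ∈ ({x, y} : Set X),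
      p = q ∨ q = r ∨ p = r := by grind
  refine ⟨hf.injOn, fun p hp q hq r hr => iff_of_true (collin_of_eq (heq p hp q hq r hr)) ?_⟩
  exact collin_of_eq ((heq p hp q hq r hr).imp (congrArg f) (.imp (congrArg f) (congrArg f)))

theorem IsPartialIso.exists_image_line (hf : IsPartialIso A f S) (hL : L ∈ A.lines)
    (hSL : (S ∩ L).Nontrivial) :
    ∃ L' ∈ A.lines, ∀ x ∈ S, f x ∈ L' ↔ x ∈ L := by
  obtain ⟨x, hx, y, hy, hxy⟩ := hSL
  obtain ⟨L', hL', hxL', hyL'⟩ := A.exists_line _ _ (hf.1.ne hx.1 hy.1 hxy)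
  refine ⟨L', hL', fun z hz => ?_⟩
  rw [← collin_iff_mem hxy hL hx.2 hy.2,
    ← collin_iff_mem (hf.1.ne hx.1 hy.1 hxy) hL' hxL' hyL', hf.2 x hx.1 y hy.1 z hz]

theorem _root_.IsAuto.image_mem_lines {g : X → X} (hg : IsAuto A g) (hL : L ∈ A.lines) :
    g '' L ∈ A.lines := by
  obtain ⟨x, hx, y, hy, hxy⟩ := exists_pair_mem hL
  obtain ⟨M, hM, hgx, hgy⟩ := A.exists_line _ _ (hg.1.1.ne hxy)
  suffices g '' L = M by rwa [this]
  ext z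
  obtain ⟨z, rfl⟩ := hg.1.2 z
  rw [hg.1.1.mem_set_image, ← collin_iff_mem hxy hL hx hy,
    ← collin_iff_mem (hg.1.1.ne hxy) hM hgx hgy, hg.2]

theorem _root_.Homogeneous.encard_eq_encard (H : Homogeneous A) (hL : L ∈ A.lines)
    (hL' : L' ∈ A.lines) : L.encard = L'.encard := by
  classical
  obtain ⟨x, hx, y, hy, hxy⟩ := exists_pair_mem hL
  obtain ⟨x', hx', y', hy', hxy'⟩ := exists_pair_mem hL'
  obtain ⟨g, hg, hgf⟩ := H.exists_auto (S := {x, y}) (f := fun z => if z = x then x' else y')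
    (Set.toFinite _)
    (isPartialIso_of_subset_union hL hL hL' hL' (by grind) (by grind [Set.InjOn]) (by grind)
      (by grind))
  have hgx : g x = x' := by simpa using hgf (Set.mem_insert x {y})
  have hgy : g y = y' := by simpa [hxy.symm] using hgf (Set.mem_insert_of_mem x rfl)
  have : g '' L = L' := line_unique hxy' (hg.image_mem_lines hL) hL' (hgx ▸ ⟨x, hx, rfl⟩)
    (hgy ▸ ⟨y, hy, rfl⟩) hx' hy'
  rw [← this, hg.1.1.encard_image]

end PartialIso

section Frame

variable {v w : Fin 4 → X} {L M : Set X} {s t : Finset (Fin 4)} {i : Fin 4} {x : X}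

/-- A frame (quadrangle): four points, no three of which are collinear, in a given order. -/
structure IsFrame (A : LinSpace X) (v : Fin 4 → X) : Prop where
  injective : Function.Injective v
  eq_of_collin : ∀ i j k, Collin A (v i) (v j) (v k) → i = j ∨ j = k ∨ i = k

theorem fourIndep_iff_exists_isFrame : FourIndep A ↔ ∃ v, IsFrame A v := by
  constructor
  · rintro ⟨a, b, c, d, hab, hac, had, hbc, hbd, hcd, h⟩
    have hv : Function.Injective ![a, b, c, d] := by
      intro i j
      fin_cases i <;> fin_cases j <;> simp [*, Ne.symm]
    have hmem (i : Fin 4) : ![a, b, c, d] i ∈ ({a, b, c, d} : Set X) := by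
      fin_cases i <;> simp
    refine ⟨_, hv, fun i j k hcol => ?_⟩
    by_contra! hne
    exact h _ _ _ (hmem i) (hmem j) (hmem k) (hv.ne hne.1) (hv.ne hne.2.2) (hv.ne hne.2.1) hcol
  · rintro ⟨v, hv, hcol⟩
    refine ⟨v 0, v 1, v 2, v 3, hv.ne (by decide), hv.ne (by decide), hv.ne (by decide),
      hv.ne (by decide), hv.ne (by decide), hv.ne (by decide), ?_⟩
    have hmem (p : X) (hp : p ∈ ({v 0, v 1, v 2, v 3} : Set X)) : ∃ i, v i = p := by
      rcases hp with rfl | rfl | rfl | rfl <;> exact ⟨_, rfl⟩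
    intro p q r hp hq hr hpq hpr hqr h
    obtain ⟨i, rfl⟩ := hmem p hp
    obtain ⟨j, rfl⟩ := hmem q hq
    obtain ⟨k, rfl⟩ := hmem r hr
    rcases hcol i j k h with rfl | rfl | rfl <;> contradiction

theorem isFrame_of_mem_diff {a b c d : X} (hL : L ∈ A.lines) (hM : M ∈ A.lines)
    (ha : a ∈ L \ M) (hb : b ∈ L \ M) (hc : c ∈ M \ L) (hd : d ∈ M \ L) (hab : a ≠ b)
    (hcd : c ≠ d) : IsFrame A ![a, b, c, d] := by
  have hvL (i : Fin 4) : ![a, b, c, d] i ∈ L ↔ i < 2 := by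
    fin_cases i <;> simp [ha.1, hb.1, hc.2, hd.2]
  have hvM (i : Fin 4) : ![a, b, c, d] i ∈ M ↔ 2 ≤ i := by
    fin_cases i <;> simp [ha.2, hb.2, hc.1, hd.1]
  have hmem (i : Fin 4) : ![a, b, c, d] i ∈ L ∪ M := by
    rw [Set.mem_union, hvL, hvM]
    exact lt_or_ge i 2
  have hv : Function.Injective ![a, b, c, d] := by
    intro i j
    fin_cases i <;> fin_cases j <;> simp <;> grind
  refine ⟨hv, fun i j k h => ?_⟩
  rw [collin_iff_of_mem_union hL hM (hmem i) (hmem j) (hmem k), hvL, hvL, hvL, hvM, hvM, hvM,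
    hv.eq_iff, hv.eq_iff, hv.eq_iff] at h
  revert i j k
  decide

theorem IsFrame.nontrivial (hv : IsFrame A v) : Nontrivial X :=
  hv.injective.nontrivial

theorem IsFrame.exists_notMem (hv : IsFrame A v) (hL : L ∈ A.lines) : ∃ x, x ∉ L := by
  by_contra! hall
  have := hv.eq_of_collin 0 1 2 ⟨L, hL, hall _, hall _, hall _⟩
  revert this
  decide

theorem IsFrame.comp_of_isPartialIso {f : X → X} {S : Set X} (hv : IsFrame A v)
    (hf : IsPartialIso A f S) (hvS : ∀ i, v i ∈ S) : IsFrame A (f ∘ v) where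
  injective i j h := hv.injective (hf.1 (hvS i) (hvS j) h)
  eq_of_collin i j k h :=
    hv.eq_of_collin i j k ((hf.2 _ (hvS i) _ (hvS j) _ (hvS k)).2 h)

theorem _root_.Homogeneous.exists_auto_of_isFrame (H : Homogeneous A) (hv : IsFrame A v)
    (hw : IsFrame A w) : ∃ g, IsAuto A g ∧ ∀ i, g (v i) = w i := by
  have := hv.nontrivial
  have hvw : ∀ i, Function.extend v w id (v i) = w i := hv.injective.extend_apply w id
  obtain ⟨g, hg, hgv⟩ := H.exists_auto (S := Set.range v) (f := Function.extend v w id)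
    (Set.finite_range v) <| by
      constructor
      · rintro _ ⟨i, rfl⟩ _ ⟨j, rfl⟩ h
        rw [hvw, hvw] at h
        rw [hw.injective h]
      · rintro _ ⟨i, rfl⟩ _ ⟨j, rfl⟩ _ ⟨k, rfl⟩
        rw [hvw, hvw, hvw]
        constructor <;> intro h <;> apply collin_of_eq
        · exact (hv.eq_of_collin i j k h).imp (congrArg w) (.imp (congrArg w) (congrArg w))
        · exact (hw.eq_of_collin i j k h).imp (congrArg v) (.imp (congrArg v) (congrArg v))
  exact ⟨g, hg, fun i => (hgv ⟨i, rfl⟩).trans (hvw i)⟩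

/-- The two-element sets of indices of a frame, which label its six sides; the opposite of the side
labelled `s` is labelled `sᶜ`. -/
def pairs : Finset (Finset (Fin 4)) :=
  Finset.powersetCard 2 Finset.univ

theorem compl_mem_pairs (hs : s ∈ pairs) : sᶜ ∈ pairs := by
  revert s
  decide

/-- The points on a common line with the points `v i`, `i ∈ s`. For a frame `v` and `s ∈ pairs` this
is the side of the frame labelled `s`. -/
def side (A : LinSpace X) (v : Fin 4 → X) (s : Finset (Fin 4)) : Set X :=
  {x | ∃ L ∈ A.lines, x ∈ L ∧ ∀ i ∈ s, v i ∈ L}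

theorem collin_iff_mem_side {i j : Fin 4} {x : X} :
    Collin A (v i) (v j) x ↔ x ∈ side A v {i, j} := by
  simp only [Collin, side, Set.mem_ofPred_eq, Finset.forall_mem_insert,
    Finset.mem_singleton, forall_eq]
  exact exists_congr fun L => by tauto

theorem IsFrame.side_mem_lines (hv : IsFrame A v) (hs : s ∈ pairs) : side A v s ∈ A.lines := by
  obtain ⟨i, j, hij, rfl⟩ := Finset.card_eq_two.1 (Finset.mem_powersetCard_univ.1 hs)
  obtain ⟨L, hL, hi, hj⟩ := A.exists_line _ _ (hv.injective.ne hij)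
  suffices side A v {i, j} = L by rwa [this]
  ext x
  rw [← collin_iff_mem_side, collin_iff_mem (hv.injective.ne hij) hL hi hj]

theorem IsFrame.mem_side_iff (hv : IsFrame A v) (hs : s ∈ pairs) : v i ∈ side A v s ↔ i ∈ s := by
  obtain ⟨j, k, hjk, rfl⟩ := Finset.card_eq_two.1 (Finset.mem_powersetCard_univ.1 hs)
  have := hv.nontrivial
  rw [← collin_iff_mem_side, Finset.mem_insert, Finset.mem_singleton]
  refine ⟨fun h => ?_, ?_⟩
  · have := hv.eq_of_collin j k i h
    tauto
  · rintro (rfl | rfl)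
    exacts [collin_of_eq (.inr (.inr rfl)), collin_of_eq (.inr (.inl rfl))]

theorem IsFrame.side_ne_side (hv : IsFrame A v) (hs : s ∈ pairs) (ht : t ∈ pairs) (hst : s ≠ t) :
    side A v s ≠ side A v t := fun h =>
  hst (Finset.ext fun i => by rw [← hv.mem_side_iff hs, h, hv.mem_side_iff ht])

theorem IsFrame.eq_of_mem_side {y : X} (hv : IsFrame A v) (hs : s ∈ pairs) (ht : t ∈ pairs)
    (hst : s ≠ t) (hxs : x ∈ side A v s) (hxt : x ∈ side A v t) (hys : y ∈ side A v s)
    (hyt : y ∈ side A v t) : x = y :=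
  A.inter_subsingleton _ (hv.side_mem_lines hs) _ (hv.side_mem_lines ht)
    (hv.side_ne_side hs ht hst) ⟨hxs, hxt⟩ ⟨hys, hyt⟩

theorem IsFrame.eq_vertex_of_mem_side (hv : IsFrame A v) (hs : s ∈ pairs) (ht : t ∈ pairs)
    (hst : s ≠ t) (his : i ∈ s) (hit : i ∈ t) (hxs : x ∈ side A v s) (hxt : x ∈ side A v t) :
    x = v i :=
  hv.eq_of_mem_side hs ht hst hxs hxt ((hv.mem_side_iff hs).2 his) ((hv.mem_side_iff ht).2 hit)

theorem IsFrame.notMem_side_of_mem_compl (hv : IsFrame A v) (hs : s ∈ pairs) (ht : t ∈ pairs)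
    (hts : t ≠ s) (htc : t ≠ sᶜ) (hxs : x ∈ side A v s) (hxc : x ∈ side A v sᶜ) :
    x ∉ side A v t := by
  intro hxt
  have hmeet : ∀ s ∈ pairs, ∀ t ∈ pairs, t ≠ sᶜ → ∃ i ∈ s, i ∈ t := by decide
  obtain ⟨i, his, hit⟩ := hmeet s hs t ht htc
  obtain ⟨j, hjs, hjt⟩ := hmeet sᶜ (compl_mem_pairs hs) t ht (by rwa [compl_compl])
  have hxi : x = v i := hv.eq_vertex_of_mem_side hs ht hts.symm his hit hxs hxt
  have hxj : x = v j := hv.eq_vertex_of_mem_side (compl_mem_pairs hs) ht htc.symm hjs hjt hxc hxt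
  exact Finset.mem_compl.1 hjs (hv.injective (hxi.symm.trans hxj) ▸ his)

end Frame

section Forward

variable {L M : Set X} {v : Fin 4 → X}

theorem exists_isFrame_of_not_collin (hcard : ∀ L ∈ A.lines, 2 < L.encard)
    (hnc : ¬ ∀ x y z, Collin A x y z) (hL : L ∈ A.lines) :
    ∃ v e, IsFrame A v ∧ Collin A (v 0) (v 1) e ∧ Collin A (v 2) (v 3) e := by
  have : Nontrivial X := by
    obtain ⟨x, -, y, -, hxy⟩ := exists_pair_mem hL
    exact ⟨x, y, hxy⟩
  push Not at hnc
  obtain ⟨e, y, z, hnc⟩ := hnc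
  obtain ⟨L, hL, heL, hyL⟩ := A.exists_line e y fun h => hnc (collin_of_eq (.inl h))
  obtain ⟨M, hM, heM, hzM⟩ := A.exists_line e z fun h => hnc (collin_of_eq (.inr (.inr h)))
  have hne : L ≠ M := fun h => hnc ⟨L, hL, heL, hyL, h ▸ hzM⟩
  have hinter (p : X) (hp : p ∈ L) (hp' : p ∈ M) : p = e :=
    A.inter_subsingleton L hL M hM hne ⟨hp, hp'⟩ ⟨heL, heM⟩
  obtain ⟨a, ha, b, hb, hab, hae, hbe⟩ := exists_pair_mem_ne (hcard L hL) e
  obtain ⟨c, hc, d, hd, hcd, hce, hde⟩ := exists_pair_mem_ne (hcard M hM) e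
  have hv : IsFrame A ![a, b, c, d] := isFrame_of_mem_diff hL hM
    ⟨ha, fun h => hae (hinter _ ha h)⟩ ⟨hb, fun h => hbe (hinter _ hb h)⟩
    ⟨hc, fun h => hce (hinter _ h hc)⟩ ⟨hd, fun h => hde (hinter _ h hd)⟩ hab hcd
  exact ⟨_, e, hv, ⟨L, hL, ha, hb, heL⟩, ⟨M, hM, hc, hd, heM⟩⟩

-- Disjoint lines would carry a frame `w` for which the line through `w 0` and `w 1` does not meet
-- the line through `w 2` and `w 3`.
theorem _root_.Homogeneous.inter_nonempty (H : Homogeneous A) (hcard : ∀ L ∈ A.lines, 2 < L.encard)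
    (hnc : ¬ ∀ x y z, Collin A x y z) (hL : L ∈ A.lines) (hM : M ∈ A.lines) :
    (L ∩ M).Nonempty := by
  by_contra hLM
  have hdisj : Disjoint L M :=
    Set.disjoint_iff_inter_eq_empty.2 (Set.not_nonempty_iff_eq_empty.1 hLM)
  obtain ⟨a, ha, b, hb, hab⟩ := exists_pair_mem hL
  obtain ⟨c, hc, d, hd, hcd⟩ := exists_pair_mem hM
  have hw : IsFrame A ![a, b, c, d] := isFrame_of_mem_diff hL hM
    ⟨ha, hdisj.notMem_of_mem_left ha⟩ ⟨hb, hdisj.notMem_of_mem_left hb⟩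
    ⟨hc, hdisj.notMem_of_mem_right hc⟩ ⟨hd, hdisj.notMem_of_mem_right hd⟩ hab hcd
  obtain ⟨v, e, hv, he₁, he₂⟩ := exists_isFrame_of_not_collin hcard hnc hL
  obtain ⟨g, hg, hgv⟩ := H.exists_auto_of_isFrame hv hw
  rw [hg.2, hgv, hgv] at he₁ he₂
  exact hLM ⟨g e, (collin_iff_mem hab hL ha hb).1 he₁, (collin_iff_mem hcd hM hc hd).1 he₂⟩

theorem _root_.Homogeneous.isProjPlane (H : Homogeneous A) (hcard : ∀ L ∈ A.lines, 2 < L.encard)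
    (hnc : ¬ ∀ x y z, Collin A x y z) (hL : L ∈ A.lines) : IsProjPlane A := by
  obtain ⟨v, -, hv, -⟩ := exists_isFrame_of_not_collin hcard hnc hL
  exact ⟨fun L hL M hM => H.inter_nonempty hcard hnc hL hM,
    fourIndep_iff_exists_isFrame.2 ⟨v, hv⟩⟩

-- Let the line through `p` and `a` meet the side `v 2, v 3` in `c`. The automorphism swapping `v 0`
-- and `v 1` and fixing `v 2`, `v 3`, `a` and `c` maps `p` to `q`.
theorem _root_.Homogeneous.collin_diagonal (H : Homogeneous A)
    (hmeet : ∀ L₁ ∈ A.lines, ∀ L₂ ∈ A.lines, (L₁ ∩ L₂).Nonempty) (hv : IsFrame A v) {p q a : X}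
    (hp₁ : p ∈ side A v {0, 2}) (hp₂ : p ∈ side A v {1, 3}) (hq₁ : q ∈ side A v {0, 3})
    (hq₂ : q ∈ side A v {1, 2}) (ha : a ∈ side A v {0, 1}) (ha' : a ∉ side A v {2, 3})
    (ha₀ : a ≠ v 0) (ha₁ : a ≠ v 1) : Collin A p q a := by
  classical
  set L := side A v {0, 1}
  set M := side A v {2, 3}
  have hL : L ∈ A.lines := hv.side_mem_lines (by decide)
  have hM : M ∈ A.lines := hv.side_mem_lines (by decide)
  have hvL (i : Fin 4) : v i ∈ L ↔ i ∈ ({0, 1} : Finset (Fin 4)) := hv.mem_side_iff (by decide)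
  have hvM (i : Fin 4) : v i ∈ M ↔ i ∈ ({2, 3} : Finset (Fin 4)) := hv.mem_side_iff (by decide)
  have hpL : p ∉ L := hv.notMem_side_of_mem_compl (s := {0, 2}) (by decide) (by decide)
    (by decide) (by decide) hp₁ hp₂
  obtain ⟨N, hN, hpN, haN⟩ := A.exists_line p a (by rintro rfl; exact hpL ha)
  obtain ⟨c, hcN, hcM⟩ := hmeet N hN M hM
  have hac : a ≠ c := by rintro rfl; exact ha' hcM
  have hcL : c ∉ L := fun hcL => hpL (line_unique hac hN hL haN hcN ha hcL ▸ hpN)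
  obtain ⟨g, hg, hgf⟩ := H.exists_auto (S := {v 0, v 1, v 2, v 3, a, c})
    (f := Equiv.swap (v 0) (v 1)) (Set.toFinite _)
    (isPartialIso_of_subset_union hL hM hL hM (by grind) (Equiv.injective _).injOn (by grind)
      (by grind))
  simp only [Set.EqOn, Set.mem_insert_iff, Set.mem_singleton_iff, forall_eq_or_imp, forall_eq,
    Equiv.swap_apply_left, Equiv.swap_apply_right] at hgf
  obtain ⟨hg₀, hg₁, hg₂, hg₃, hga, hgc⟩ := hgf
  rw [Equiv.swap_apply_of_ne_of_ne (by grind) (by grind)] at hg₂ hg₃ hga hgc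
  have hgp : g p = q := by
    rw [← collin_iff_mem_side, hg.2] at hp₁ hp₂
    rw [hg₀, hg₂, collin_iff_mem_side] at hp₁
    rw [hg₁, hg₃, collin_iff_mem_side] at hp₂
    exact hv.eq_of_mem_side (by decide) (by decide) (by decide) hp₂ hp₁ hq₁ hq₂
  have hgN : Collin A a c q := by
    have := (hg.2 a c p).1 ⟨N, hN, haN, hcN, hpN⟩
    rwa [hga, hgc, hgp] at this
  exact ⟨N, hN, hpN, (collin_iff_mem hac hN haN hcN).1 hgN, haN⟩

theorem _root_.Homogeneous.exists_side_subset (H : Homogeneous A)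
    (hmeet : ∀ L₁ ∈ A.lines, ∀ L₂ ∈ A.lines, (L₁ ∩ L₂).Nonempty) (hv : IsFrame A v) :
    ∃ e x, side A v {0, 1} ⊆ {e, v 0, v 1, x} := by
  have hlines {s} (hs : s ∈ pairs) := hv.side_mem_lines hs
  set L := side A v {0, 1}
  set M := side A v {2, 3}
  have hL : L ∈ A.lines := hlines (by decide)
  obtain ⟨e, heL, heM⟩ := hmeet L hL M (hlines (by decide))
  obtain ⟨p, hp₁, hp₂⟩ := hmeet (side A v {0, 2}) (hlines (by decide)) (side A v {1, 3})
    (hlines (by decide))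
  obtain ⟨q, hq₁, hq₂⟩ := hmeet (side A v {0, 3}) (hlines (by decide)) (side A v {1, 2})
    (hlines (by decide))
  have hp {t : Finset (Fin 4)} (ht : t ∈ pairs) (h : t ≠ {0, 2}) (h' : t ≠ {0, 2}ᶜ) :
      p ∉ side A v t := hv.notMem_side_of_mem_compl (by decide) ht h h' hp₁ hp₂
  have hpq : p ≠ q := by
    rintro rfl
    exact hp (by decide) (by decide) (by decide) hq₁
  obtain ⟨K, hK, hpK, hqK⟩ := A.exists_line p q hpq
  obtain ⟨x, hxL, hxK⟩ := hmeet L hL K hK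
  refine ⟨e, x, fun a haL => ?_⟩
  by_contra! ha
  simp only [Set.mem_insert_iff, Set.mem_singleton_iff, not_or] at ha
  obtain ⟨hae, ha₀, ha₁, hax⟩ := ha
  have haM : a ∉ M := fun haM => hae <|
    hv.eq_of_mem_side (by decide) (by decide) (by decide) haL haM heL heM
  have haK : a ∈ K := (collin_iff_mem hpq hK hpK hqK).1 <|
    H.collin_diagonal hmeet hv hp₁ hp₂ hq₁ hq₂ haL haM ha₀ ha₁
  have hLK : L = K := line_unique hax hL hK haL hxL haK hxK
  exact hp (t := {0, 1}) (by decide) (by decide) (by decide) (show p ∈ L from hLK ▸ hpK)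

theorem _root_.Homogeneous.exists_encard_le_four (H : Homogeneous A) (hA : IsProjPlane A) :
    ∃ L ∈ A.lines, L.encard ≤ 4 := by
  classical
  obtain ⟨v, hv⟩ := fourIndep_iff_exists_isFrame.1 hA.2
  obtain ⟨e, x, hsub⟩ := H.exists_side_subset hA.1 hv
  refine ⟨_, hv.side_mem_lines (s := {0, 1}) (by decide), (Set.encard_le_encard hsub).trans ?_⟩
  have hfinset : ({e, v 0, v 1, x} : Set X) = ↑({e, v 0, v 1, x} : Finset X) := by
    simp only [Finset.coe_insert, Finset.coe_singleton]
  rw [hfinset, Set.encard_coe_eq_coe_finsetCard]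
  exact_mod_cast Finset.card_le_four

end Forward

section Transversal

variable {P Q : Finset (Finset (Finset (Fin 4)))} {m u : Finset (Finset (Fin 4))}
  {s : Finset (Fin 4)}

/-- The labels of the three sides of a frame through its vertex `i`. -/
def star (i : Fin 4) : Finset (Finset (Fin 4)) :=
  {s ∈ pairs | i ∈ s}

/-- The three pairs of labels of opposite sides of a frame. -/
def matchings : Finset (Finset (Finset (Fin 4))) :=
  pairs.image fun s => {s, sᶜ}

/-- The position of a point relative to a frame is the set of labels of the sides through it. In a
projective plane with `k ∈ {3, 4}` points on each line these are the possible positions: vertices,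
diagonal points and, for `k = 4`, one more point on each side. -/
def positions (k : ℕ) : Finset (Finset (Finset (Fin 4))) :=
  Finset.univ.image star ∪ matchings ∪ if k = 4 then pairs.image singleton else ∅

/-- Partitions of the six sides of a frame into `k` positions. They are the sets of positions of the
points of those lines which are not sides. -/
structure IsTransversal (k : ℕ) (P : Finset (Finset (Finset (Fin 4)))) : Prop where
  subset_positions : P ⊆ positions k
  card_eq : P.card = k
  disjoint : ∀ u ∈ P, ∀ u' ∈ P, u ≠ u' → Disjoint u u'
  exists_mem : ∀ s ∈ pairs, ∃ u ∈ P, s ∈ u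

theorem mem_positions {k : ℕ} : u ∈ positions k ↔
    (∃ i, star i = u) ∨ u ∈ matchings ∨ k = 4 ∧ ∃ s ∈ pairs, {s} = u := by
  by_cases hk : k = 4 <;> simp [positions, hk]

theorem card_star (i : Fin 4) : (star i).card = 3 := by
  revert i
  decide

theorem card_matchings : matchings.card = 3 := by
  decide

theorem eq_pair_of_mem_matchings (hm : m ∈ matchings) (hs : s ∈ m) : m = {s, sᶜ} := by
  obtain ⟨t, -, rfl⟩ := Finset.mem_image.1 hm
  rcases Finset.mem_insert.1 hs with rfl | hs
  · rfl
  · rw [Finset.mem_singleton.1 hs, compl_compl, Finset.pair_comm]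

theorem card_of_mem_matchings (hm : m ∈ matchings) : m.card = 2 := by
  obtain ⟨s, -, rfl⟩ := Finset.mem_image.1 hm
  exact Finset.card_pair (by revert s; decide)

theorem subset_pairs_of_mem_positions {k : ℕ} (hu : u ∈ positions k) : u ⊆ pairs := by
  rcases mem_positions.1 hu with ⟨i, rfl⟩ | hu | ⟨-, s, hs, rfl⟩
  · exact Finset.filter_subset _ _
  · obtain ⟨s, hs, rfl⟩ := Finset.mem_image.1 hu
    exact Finset.insert_subset hs (Finset.singleton_subset_iff.2 (compl_mem_pairs hs))
  · exact Finset.singleton_subset_iff.2 hs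

theorem eq_singleton_of_disjoint_star {k : ℕ} {i : Fin 4} (hu : u ∈ positions k)
    (h : Disjoint (star i) u) : k = 4 ∧ ∃ s ∈ pairs, i ∉ s ∧ {s} = u := by
  have hstar : ∀ i j, ¬ Disjoint (star i) (star j) := by decide
  have hmatching : ∀ i, ∀ s ∈ pairs, ¬ Disjoint (star i) {s, sᶜ} := by decide
  rcases mem_positions.1 hu with ⟨j, rfl⟩ | hu | ⟨hk, s, hs, rfl⟩
  · exact absurd h (hstar i j)
  · obtain ⟨s, hs, rfl⟩ := Finset.mem_image.1 hu
    exact absurd h (hmatching i s hs)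
  · refine ⟨hk, s, hs, fun his => ?_, rfl⟩
    exact Finset.disjoint_singleton_right.1 h (Finset.mem_filter.2 ⟨hs, his⟩)

theorem IsTransversal.eq_matchings (hP : IsTransversal 3 P) : P = matchings := by
  refine Finset.eq_of_subset_of_card_le (fun u hu => ?_) (by rw [hP.card_eq, card_matchings])
  rcases mem_positions.1 (hP.subset_positions hu) with ⟨i, rfl⟩ | hu | ⟨hk, -⟩
  · obtain ⟨u, hu', hne⟩ := Finset.exists_mem_ne (by rw [hP.card_eq]; norm_num) (star i)
    have := eq_singleton_of_disjoint_star (hP.subset_positions hu')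
      (hP.disjoint _ hu _ hu' hne.symm)
    exact absurd this.1 (by norm_num)
  · exact hu
  · exact absurd hk (by norm_num)

/-- The positions on the line joining the vertex `i` to the points of the three sides not through
`i` which are neither vertices nor diagonal points. -/
def starTransversal (i : Fin 4) : Finset (Finset (Finset (Fin 4))) :=
  insert (star i) ({s ∈ pairs | i ∉ s}.image singleton)

/-- The positions on the line joining the diagonal points other than the one labelled `m`. -/
def matchingTransversal (m : Finset (Finset (Fin 4))) : Finset (Finset (Finset (Fin 4))) :=
  matchings.erase m ∪ m.image singleton

theorem mem_starTransversal {i : Fin 4} :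
    u ∈ starTransversal i ↔ u = star i ∨ ∃ s ∈ pairs, i ∉ s ∧ {s} = u := by
  simp only [starTransversal, Finset.mem_insert, Finset.mem_image, Finset.mem_filter, and_assoc]

theorem mem_matchingTransversal :
    u ∈ matchingTransversal m ↔ (u ≠ m ∧ u ∈ matchings) ∨ ∃ s ∈ m, {s} = u := by
  simp only [matchingTransversal, Finset.mem_union, Finset.mem_erase, Finset.mem_image]

theorem card_starTransversal_le (i : Fin 4) : (starTransversal i).card ≤ 4 := by
  revert i
  decide

theorem card_matchingTransversal_le (hm : m ∈ matchings) : (matchingTransversal m).card ≤ 4 := by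
  refine (Finset.card_union_le _ _).trans ?_
  rw [Finset.card_erase_of_mem hm, card_matchings,
    Finset.card_image_of_injective _ Finset.singleton_injective, card_of_mem_matchings hm]

theorem IsTransversal.eq_starTransversal {i : Fin 4} (hP : IsTransversal 4 P) (hi : star i ∈ P) :
    P = starTransversal i := by
  refine Finset.eq_of_subset_of_card_le (fun u hu => ?_)
    (by rw [hP.card_eq]; exact card_starTransversal_le i)
  rw [mem_starTransversal, or_iff_not_imp_left]
  exact fun hne => (eq_singleton_of_disjoint_star (hP.subset_positions hu)
    (hP.disjoint _ hi u hu (Ne.symm hne))).2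

theorem IsTransversal.sum_card_eq {k : ℕ} (hP : IsTransversal k P) : ∑ u ∈ P, u.card = 6 := by
  have hunion : P.biUnion id = pairs := by
    refine subset_antisymm (Finset.biUnion_subset.2 fun u hu =>
      subset_pairs_of_mem_positions (hP.subset_positions hu)) fun s hs => ?_
    obtain ⟨u, hu, hsu⟩ := hP.exists_mem s hs
    exact Finset.mem_biUnion.2 ⟨u, hu, hsu⟩
  have hcard := Finset.card_biUnion (s := P) (t := id) hP.disjoint
  rw [hunion] at hcard
  exact hcard.symm.trans (by decide)

theorem IsTransversal.mem_matchings_or_eq_singleton {k : ℕ} (hP : IsTransversal k P)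
    (hstar : ∀ i, star i ∉ P) (hu : u ∈ P) : u ∈ matchings ∨ ∃ s ∈ pairs, {s} = u := by
  rcases mem_positions.1 (hP.subset_positions hu) with ⟨i, rfl⟩ | hu' | ⟨-, hu'⟩
  exacts [absurd hu (hstar i), .inl hu', .inr hu']

-- The six sides are distributed among the four positions, each of which has one or two elements.
theorem IsTransversal.card_inter_matchings (hP : IsTransversal 4 P) (hstar : ∀ i, star i ∉ P) :
    (P ∩ matchings).card = 2 := by
  have hcard (u) (hu : u ∈ P) : u.card = 1 + if u ∈ matchings then 1 else 0 := by
    rcases hP.mem_matchings_or_eq_singleton hstar hu with hu' | ⟨s, -, rfl⟩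
    · rw [if_pos hu', card_of_mem_matchings hu']
    · rw [if_neg fun h => by simpa using card_of_mem_matchings h, Finset.card_singleton]
  have hsum := hP.sum_card_eq
  rw [Finset.sum_congr rfl hcard, Finset.sum_add_distrib, ← Finset.card_filter,
    Finset.filter_mem_eq_inter, ← Finset.card_eq_sum_ones, hP.card_eq] at hsum
  omega

theorem IsTransversal.exists_eq_matchingTransversal (hP : IsTransversal 4 P)
    (hstar : ∀ i, star i ∉ P) : ∃ m ∈ matchings, P = matchingTransversal m := by
  obtain ⟨m, hm⟩ : ∃ m, matchings \ P = {m} := by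
    rw [← Finset.card_eq_one, Finset.card_sdiff, hP.card_inter_matchings hstar, card_matchings]
  have hmP : m ∈ matchings ∧ m ∉ P := Finset.mem_sdiff.1 (hm ▸ Finset.mem_singleton_self m)
  refine ⟨m, hmP.1, Finset.eq_of_subset_of_card_le (fun u hu => ?_)
    (by rw [hP.card_eq]; exact card_matchingTransversal_le hmP.1)⟩
  rw [mem_matchingTransversal]
  rcases hP.mem_matchings_or_eq_singleton hstar hu with hu' | ⟨s, hs, rfl⟩
  · exact .inl ⟨by rintro rfl; exact hmP.2 hu, hu'⟩
  · refine .inr ⟨s, ?_, rfl⟩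
    have hs' : {s, sᶜ} ∈ matchings := Finset.mem_image_of_mem _ hs
    by_cases hsP : {s, sᶜ} ∈ P
    · have hne : {s} ≠ ({s, sᶜ} : Finset (Finset (Fin 4))) := fun h => by
        simpa [← h] using card_of_mem_matchings hs'
      have := hP.disjoint _ hu _ hsP hne
      simp at this
    · have : {s, sᶜ} ∈ matchings \ P := Finset.mem_sdiff.2 ⟨hs', hsP⟩
      rw [hm, Finset.mem_singleton] at this
      exact this ▸ Finset.mem_insert_self s _

theorem IsTransversal.eq_starTransversal_or_eq_matchingTransversal (hP : IsTransversal 4 P) :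
    (∃ i, P = starTransversal i) ∨ ∃ m ∈ matchings, P = matchingTransversal m := by
  by_cases hstar : ∃ i, star i ∈ P
  · exact .inl (hstar.imp fun i => hP.eq_starTransversal)
  · exact .inr (hP.exists_eq_matchingTransversal (not_exists.1 hstar))

theorem star_ne_singleton (i : Fin 4) : star i ≠ {s} := fun h => by
  simpa [h] using card_star i

theorem card_starTransversal_inter_starTransversal_le {i j : Fin 4} (hij : i ≠ j) :
    (starTransversal i ∩ starTransversal j).card ≤ 1 := by
  have key : ∀ i j, i ≠ j → ∀ s ∈ pairs, i ∉ s → j ∉ s → s = {i, j}ᶜ := by decide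
  have hstar : ∀ i j, star i = star j → i = j := by decide
  have hmem (u) (hu : u ∈ starTransversal i ∩ starTransversal j) : u = {{i, j}ᶜ} := by
    rw [Finset.mem_inter, mem_starTransversal, mem_starTransversal] at hu
    rcases hu with ⟨rfl | ⟨s, hs, his, rfl⟩, hu | ⟨t, -, hjt, hu⟩⟩
    · exact absurd (hstar i j hu) hij
    · exact absurd hu.symm (star_ne_singleton i)
    · exact absurd hu.symm (star_ne_singleton j)
    · rw [Finset.singleton_inj] at hu ⊢
      exact key i j hij s hs his (hu ▸ hjt)
  exact Finset.card_le_one.2 fun u hu u' hu' => (hmem u hu).trans (hmem u' hu').symm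

theorem card_starTransversal_inter_matchingTransversal_le (i : Fin 4) (hm : m ∈ matchings) :
    (starTransversal i ∩ matchingTransversal m).card ≤ 1 := by
  have hmem (u) (hu : u ∈ starTransversal i ∩ matchingTransversal m) :
      ∃ s ∈ m, i ∉ s ∧ {s} = u := by
    rw [Finset.mem_inter, mem_starTransversal, mem_matchingTransversal] at hu
    rcases hu with ⟨rfl | ⟨s, -, his, rfl⟩, ⟨-, hu⟩ | ⟨t, ht, hu⟩⟩
    · simpa [card_star] using card_of_mem_matchings hu
    · exact absurd hu.symm (star_ne_singleton i)
    · simpa using card_of_mem_matchings hu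
    · exact ⟨s, Finset.singleton_injective hu ▸ ht, his, rfl⟩
  refine Finset.card_le_one.2 fun u hu u' hu' => ?_
  obtain ⟨s, hs, his, rfl⟩ := hmem u hu
  obtain ⟨t, ht, hit, rfl⟩ := hmem u' hu'
  rw [eq_pair_of_mem_matchings hm hs, Finset.mem_insert, Finset.mem_singleton] at ht
  rcases ht with rfl | rfl
  · rfl
  · exact absurd (Finset.mem_compl.2 his) hit

theorem card_matchingTransversal_inter_matchingTransversal_le {m' : Finset (Finset (Fin 4))}
    (hm : m ∈ matchings) (hm' : m' ∈ matchings) (hne : m ≠ m') :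
    (matchingTransversal m ∩ matchingTransversal m').card ≤ 1 := by
  have hsub : matchingTransversal m ∩ matchingTransversal m' ⊆ (matchings.erase m).erase m' := by
    intro u hu
    rw [Finset.mem_inter, mem_matchingTransversal, mem_matchingTransversal] at hu
    rw [Finset.mem_erase, Finset.mem_erase]
    rcases hu with ⟨hu | ⟨s, hs, rfl⟩, hu' | ⟨t, ht, hu'⟩⟩
    · exact ⟨hu'.1, hu⟩
    · simpa [← hu'] using card_of_mem_matchings hu.2
    · simpa using card_of_mem_matchings hu'.2
    · rw [Finset.singleton_inj.1 hu'] at ht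
      exact absurd ((eq_pair_of_mem_matchings hm hs).trans (eq_pair_of_mem_matchings hm' ht).symm)
        hne
  refine (Finset.card_le_card hsub).trans ?_
  rw [Finset.card_erase_of_mem (Finset.mem_erase.2 ⟨hne.symm, hm'⟩), Finset.card_erase_of_mem hm,
    card_matchings]

theorem IsTransversal.eq_of_one_lt_card_inter {k : ℕ} (hk : k = 3 ∨ k = 4) (hP : IsTransversal k P)
    (hQ : IsTransversal k Q) (hPQ : 1 < (P ∩ Q).card) : P = Q := by
  rcases hk with rfl | rfl
  · rw [hP.eq_matchings, hQ.eq_matchings]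
  contrapose! hPQ
  rcases hP.eq_starTransversal_or_eq_matchingTransversal with ⟨i, rfl⟩ | ⟨m, hm, rfl⟩ <;>
    rcases hQ.eq_starTransversal_or_eq_matchingTransversal with ⟨j, rfl⟩ | ⟨m', hm', rfl⟩
  · exact card_starTransversal_inter_starTransversal_le (by rintro rfl; exact hPQ rfl)
  · exact card_starTransversal_inter_matchingTransversal_le i hm'
  · rw [Finset.inter_comm]
    exact card_starTransversal_inter_matchingTransversal_le j hm
  · exact card_matchingTransversal_inter_matchingTransversal_le hm hm'
      (by rintro rfl; exact hPQ rfl)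

end Transversal

section Trace

variable {v : Fin 4 → X} {s : Finset (Fin 4)} {x : X}

open Classical in
/-- The position of the point `x` relative to the frame `v`: the labels of the sides through `x`. -/
noncomputable def trace (A : LinSpace X) (v : Fin 4 → X) (x : X) : Finset (Finset (Fin 4)) :=
  {s ∈ pairs | x ∈ side A v s}

theorem mem_trace : s ∈ trace A v x ↔ s ∈ pairs ∧ x ∈ side A v s := by
  classical exact Finset.mem_filter

theorem IsFrame.trace_vertex (hv : IsFrame A v) (i : Fin 4) : trace A v (v i) = star i := by
  ext s
  rw [mem_trace, star, Finset.mem_filter]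
  exact and_congr_right hv.mem_side_iff

theorem IsFrame.trace_subset (hv : IsFrame A v) (hs : s ∈ pairs) (hx : x ∈ side A v s)
    (hxv : x ∉ Set.range v) : trace A v x ⊆ {s, sᶜ} := by
  have hmeet : ∀ s ∈ pairs, ∀ t ∈ pairs, t ≠ sᶜ → ∃ i ∈ s, i ∈ t := by decide
  intro t ht
  obtain ⟨ht, hxt⟩ := mem_trace.1 ht
  rw [Finset.mem_insert, Finset.mem_singleton]
  by_contra! hne
  obtain ⟨i, his, hit⟩ := hmeet s hs t ht hne.2
  exact hxv ⟨i, (hv.eq_vertex_of_mem_side hs ht hne.1.symm his hit hx hxt).symm⟩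

theorem IsFrame.trace_eq_pair (hv : IsFrame A v) (hs : s ∈ pairs) (hx : x ∈ side A v s)
    (hx' : x ∈ side A v sᶜ) : trace A v x = {s, sᶜ} := by
  have hsc : sᶜ ∈ pairs := compl_mem_pairs hs
  refine (hv.trace_subset hs hx ?_).antisymm ?_
  · rintro ⟨i, rfl⟩
    exact Finset.mem_compl.1 ((hv.mem_side_iff hsc).1 hx') ((hv.mem_side_iff hs).1 hx)
  · rw [Finset.insert_subset_iff, Finset.singleton_subset_iff]
    exact ⟨mem_trace.2 ⟨hs, hx⟩, mem_trace.2 ⟨hsc, hx'⟩⟩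

theorem IsFrame.trace_eq_singleton (hv : IsFrame A v) (hs : s ∈ pairs) (hx : x ∈ side A v s)
    (hxv : x ∉ Set.range v) (hx' : x ∉ side A v sᶜ) : trace A v x = {s} := by
  refine Finset.Subset.antisymm (fun t ht => ?_)
    (Finset.singleton_subset_iff.2 (mem_trace.2 ⟨hs, hx⟩))
  rcases Finset.mem_insert.1 (hv.trace_subset hs hx hxv ht) with rfl | hts
  · exact Finset.mem_singleton_self t
  · exact absurd (Finset.mem_singleton.1 hts ▸ (mem_trace.1 ht).2) hx'

theorem IsFrame.trace_ne_singleton_of_mem_compl (hv : IsFrame A v) (hs : s ∈ pairs)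
    (hx : x ∈ side A v s) (hx' : x ∈ side A v sᶜ) : trace A v x ≠ {s} := by
  rw [hv.trace_eq_pair hs hx hx']
  exact fun h => by simpa [h] using card_of_mem_matchings (Finset.mem_image_of_mem _ hs)

-- The points of a side other than the two vertices and the diagonal point on it have trace `{s}`.
theorem IsFrame.encard_trace_eq_singleton (hv : IsFrame A v) (hs : s ∈ pairs)
    (hmeet : (side A v s ∩ side A v sᶜ).Nonempty) :
    {x | trace A v x = {s}}.encard + 3 = (side A v s).encard := by
  obtain ⟨e, he, he'⟩ := hmeet
  obtain ⟨i, j, hij, rfl⟩ := Finset.card_eq_two.1 (Finset.mem_powersetCard_univ.1 hs)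
  have hmem {l} : v l ∈ side A v {i, j} ↔ l ∈ ({i, j} : Finset (Fin 4)) := hv.mem_side_iff hs
  have hne (l) (hl : l ∈ ({i, j} : Finset (Fin 4))) : v l ≠ e := by
    rintro rfl
    exact Finset.mem_compl.1 ((hv.mem_side_iff (compl_mem_pairs hs)).1 he') hl
  have hi : i ∈ ({i, j} : Finset (Fin 4)) := Finset.mem_insert_self i _
  have hj : j ∈ ({i, j} : Finset (Fin 4)) := Finset.mem_insert_of_mem (Finset.mem_singleton_self j)
  have hthree : ({v i, v j, e} : Set X).encard = 3 :=
    Set.encard_eq_three.2 ⟨_, _, _, hv.injective.ne hij, hne i hi, hne j hj, rfl⟩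
  have hdisj : Disjoint {x | trace A v x = {{i, j}}} {v i, v j, e} := by
    rw [Set.disjoint_right]
    rintro x (rfl | rfl | rfl)
    · exact (hv.trace_vertex i).trans_ne (star_ne_singleton i)
    · exact (hv.trace_vertex j).trans_ne (star_ne_singleton j)
    · exact hv.trace_ne_singleton_of_mem_compl hs he he'
  rw [← hthree, ← Set.encard_union_eq hdisj]
  congr 1
  refine Set.Subset.antisymm ?_ fun x hx => ?_
  · rintro x (hx | rfl | rfl | rfl)
    exacts [(mem_trace.1 (hx ▸ Finset.mem_singleton_self _)).2, hmem.2 hi, hmem.2 hj, he]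
  · rw [Set.mem_union, or_iff_not_imp_right]
    intro hx'
    simp only [Set.mem_insert_iff, Set.mem_singleton_iff, not_or] at hx'
    refine hv.trace_eq_singleton hs hx ?_ fun hxc => hx'.2.2 <|
      hv.eq_of_mem_side hs (compl_mem_pairs hs) ne_compl_self hx hxc he he'
    rintro ⟨l, rfl⟩
    have := hmem.1 hx
    grind

end Trace

section SmallPlane

variable {k : ℕ} {L : Set X} {v w : Fin 4 → X} {s : Finset (Fin 4)} {x y : X}

/-- Any two lines meet and all lines have `k` points, where `k` is `3` or `4`. If there is a frame,
then these are the projective planes of order 2 and 3. -/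
structure IsSmallPlane (A : LinSpace X) (k : ℕ) : Prop where
  eq_or_eq : k = 3 ∨ k = 4
  inter_nonempty : ∀ L ∈ A.lines, ∀ M ∈ A.lines, (L ∩ M).Nonempty
  encard_eq : ∀ L ∈ A.lines, L.encard = k

theorem IsSmallPlane.side_inter_nonempty (hA : IsSmallPlane A k) (hv : IsFrame A v)
    (hs : s ∈ pairs) : (side A v s ∩ side A v sᶜ).Nonempty :=
  hA.inter_nonempty _ (hv.side_mem_lines hs) _ (hv.side_mem_lines (compl_mem_pairs hs))

theorem IsSmallPlane.encard_trace_eq_singleton (hA : IsSmallPlane A k) (hv : IsFrame A v)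
    (hs : s ∈ pairs) : {x | trace A v x = {s}}.encard = if k = 4 then 1 else 0 := by
  have h := hv.encard_trace_eq_singleton hs (hA.side_inter_nonempty hv hs)
  rw [hA.encard_eq _ (hv.side_mem_lines hs)] at h
  refine ENat.add_left_injective_of_ne_top (n := 3) (by simp) (h.trans ?_)
  rcases hA.eq_or_eq with rfl | rfl
  · simp
  · rw [if_pos rfl]
    norm_num

theorem IsSmallPlane.exists_mem_sides (hA : IsSmallPlane A k) (hv : IsFrame A v) (hL : L ∈ A.lines)
    (hne : ∀ i, i ≠ 0 → v i ∉ L) :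
    ∃ p ∈ L, ∃ q ∈ L, ∃ r ∈ L, p ∈ side A v {1, 2} ∧ q ∈ side A v {1, 3} ∧ r ∈ side A v {2, 3} ∧
      [v 0, p, q, r].Nodup := by
  have hmeet (s) (hs : s ∈ pairs) (hs₀ : 0 ∉ s) : ∃ y ∈ L, y ∈ side A v s ∧ v 0 ≠ y := by
    obtain ⟨y, hyL, hys⟩ := hA.inter_nonempty L hL _ (hv.side_mem_lines hs)
    refine ⟨y, hyL, hys, ?_⟩
    rintro rfl
    exact hs₀ ((hv.mem_side_iff hs).1 hys)
  have hsep {s t y z} (i : Fin 4) (hs : s ∈ pairs) (ht : t ∈ pairs) (hst : s ≠ t)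
      (hi : i ∈ s ∧ i ∈ t ∧ i ≠ 0) (hy : y ∈ side A v s) (hz : z ∈ side A v t) (hyL : y ∈ L) :
      y ≠ z := by
    rintro rfl
    exact hne i hi.2.2 (hv.eq_vertex_of_mem_side hs ht hst hi.1 hi.2.1 hy hz ▸ hyL)
  obtain ⟨p, hpL, hp, hp₀⟩ := hmeet {1, 2} (by decide) (by decide)
  obtain ⟨q, hqL, hq, hq₀⟩ := hmeet {1, 3} (by decide) (by decide)
  obtain ⟨r, hrL, hr, hr₀⟩ := hmeet {2, 3} (by decide) (by decide)
  have hpq : p ≠ q := hsep 1 (by decide) (by decide) (by decide) (by decide) hp hq hpL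
  have hpr : p ≠ r := hsep 2 (by decide) (by decide) (by decide) (by decide) hp hr hpL
  have hqr : q ≠ r := hsep 3 (by decide) (by decide) (by decide) (by decide) hq hr hqL
  exact ⟨p, hpL, q, hqL, r, hrL, hp, hq, hr, by simp [*]⟩

-- Otherwise the line joining `x` to `v 0` would contain five points: `x`, `v 0`, and its
-- intersections with the three sides not through `v 0`.
theorem IsSmallPlane.trace_nonempty (hA : IsSmallPlane A k) (hv : IsFrame A v) (x : X) :
    (trace A v x).Nonempty := by
  classical
  by_contra! h
  have hx (s) (hs : s ∈ pairs) : x ∉ side A v s := fun hxs => by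
    simpa [h] using mem_trace.2 ⟨hs, hxs⟩
  have hx₀ : x ≠ v 0 := by
    rintro rfl
    exact hx {0, 1} (by decide) ((hv.mem_side_iff (by decide)).2 (by decide))
  obtain ⟨L, hL, hxL, h₀L⟩ := A.exists_line x (v 0) hx₀
  have hpairs : ∀ i : Fin 4, i ≠ 0 → {0, i} ∈ pairs := by decide
  obtain ⟨p, hpL, q, hqL, r, hrL, hp, hq, hr, hnodup⟩ := hA.exists_mem_sides hv hL
    fun i hi hiL => hx {0, i} (hpairs i hi) (collin_iff_mem_side.1 ⟨L, hL, h₀L, hiL, hxL⟩)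
  have hnodup : [x, v 0, p, q, r].Nodup := by
    refine List.nodup_cons.2 ⟨fun hmem => ?_, hnodup⟩
    simp only [List.mem_cons, List.not_mem_nil, or_false] at hmem
    rcases hmem with rfl | rfl | rfl | rfl
    exacts [hx₀ rfl, hx _ (by decide) hp, hx _ (by decide) hq, hx _ (by decide) hr]
  have hsub : (([x, v 0, p, q, r].toFinset : Finset X) : Set X) ⊆ L := by
    intro y hy
    simp only [List.coe_toFinset, List.mem_cons, List.not_mem_nil, or_false,
      Set.mem_ofPred_eq] at hy
    rcases hy with rfl | rfl | rfl | rfl | rfl <;> assumption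
  have hle := Set.encard_le_encard hsub
  rw [Set.encard_coe_eq_coe_finsetCard, List.toFinset_card_of_nodup hnodup, hA.encard_eq L hL,
    Nat.cast_le] at hle
  rcases hA.eq_or_eq with rfl | rfl <;> norm_num at hle

theorem IsSmallPlane.trace_mem_positions (hA : IsSmallPlane A k) (hv : IsFrame A v) (x : X) :
    trace A v x ∈ positions k := by
  rw [mem_positions]
  by_cases hxv : x ∈ Set.range v
  · obtain ⟨i, rfl⟩ := hxv
    exact .inl ⟨i, (hv.trace_vertex i).symm⟩
  obtain ⟨s, hs⟩ := hA.trace_nonempty hv x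
  obtain ⟨hs, hx⟩ := mem_trace.1 hs
  by_cases hx' : x ∈ side A v sᶜ
  · rw [hv.trace_eq_pair hs hx hx']
    exact .inr (.inl (Finset.mem_image_of_mem _ hs))
  · have htrace := hv.trace_eq_singleton hs hx hxv hx'
    refine .inr (.inr ⟨?_, s, hs, htrace.symm⟩)
    by_contra hk
    have hempty := hA.encard_trace_eq_singleton hv hs
    rw [if_neg hk, Set.encard_eq_zero] at hempty
    exact Set.notMem_empty x (hempty ▸ htrace)

theorem IsSmallPlane.trace_injective (hA : IsSmallPlane A k) (hv : IsFrame A v) :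
    Function.Injective (trace A v) := by
  intro x y hxy
  obtain ⟨s, hs⟩ := hA.trace_nonempty hv x
  by_cases hsub : trace A v x = {s}
  · have hone := hA.encard_trace_eq_singleton hv (mem_trace.1 hs).1
    refine Set.encard_le_one_iff.1 (hone.le.trans (by split_ifs <;> simp)) x y hsub
      (hxy.symm.trans hsub)
  · obtain ⟨t, ht, hts⟩ := Finset.exists_mem_ne
      ((Finset.one_lt_card_iff_nontrivial).2 (Finset.nontrivial_iff_ne_singleton hs |>.2 hsub)) s
    have hs' := mem_trace.1 (hxy ▸ hs)
    have ht' := mem_trace.1 (hxy ▸ ht)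
    exact hv.eq_of_mem_side hs'.1 ht'.1 hts.symm (mem_trace.1 hs).2 (mem_trace.1 ht).2 hs'.2 ht'.2

theorem IsSmallPlane.range_trace (hA : IsSmallPlane A k) (hv : IsFrame A v) :
    Set.range (trace A v) = positions k := by
  refine Set.Subset.antisymm (Set.range_subset_iff.2 (hA.trace_mem_positions hv)) fun u hu => ?_
  rcases mem_positions.1 hu with ⟨i, rfl⟩ | hu | ⟨hk, s, hs, rfl⟩
  · exact ⟨v i, hv.trace_vertex i⟩
  · obtain ⟨s, hs, rfl⟩ := Finset.mem_image.1 hu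
    obtain ⟨e, he, he'⟩ := hA.side_inter_nonempty hv hs
    exact ⟨e, hv.trace_eq_pair hs he he'⟩
  · have hone := hA.encard_trace_eq_singleton hv hs
    rw [if_pos hk] at hone
    exact Set.encard_ne_zero.1 (hone ▸ one_ne_zero)

theorem IsSmallPlane.encard_univ (hA : IsSmallPlane A k) (hv : IsFrame A v) :
    (Set.univ : Set X).encard = (positions k).card := by
  rw [← (hA.trace_injective hv).encard_image, Set.image_univ, hA.range_trace hv,
    Set.encard_coe_eq_coe_finsetCard]

theorem IsSmallPlane.exists_isTransversal (hA : IsSmallPlane A k) (hv : IsFrame A v)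
    (hL : L ∈ A.lines) (hLs : ∀ s ∈ pairs, side A v s ≠ L) :
    ∃ P, IsTransversal k P ∧ ∀ u, u ∈ P ↔ ∃ x ∈ L, trace A v x = u := by
  set P := (trace A v '' L).toFinite.toFinset
  have hP (u) : u ∈ P ↔ ∃ x ∈ L, trace A v x = u := Set.Finite.mem_toFinset _
  refine ⟨P, ⟨fun u hu => ?_, ?_, fun u hu u' hu' hne => ?_, fun s hs => ?_⟩, hP⟩
  · obtain ⟨x, -, rfl⟩ := (hP u).1 hu
    exact hA.trace_mem_positions hv x
  · rw [← Nat.cast_inj (R := ℕ∞), ← Set.encard_coe_eq_coe_finsetCard, Set.Finite.coe_toFinset,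
      (hA.trace_injective hv).encard_image, hA.encard_eq L hL]
  · obtain ⟨x, hx, rfl⟩ := (hP u).1 hu
    obtain ⟨y, hy, rfl⟩ := (hP u').1 hu'
    refine Finset.disjoint_left.2 fun s hsx hsy => ?_
    obtain ⟨hs, hxs⟩ := mem_trace.1 hsx
    have hys := (mem_trace.1 hsy).2
    exact hLs s hs (line_unique (by rintro rfl; exact hne rfl) (hv.side_mem_lines hs) hL hxs hys
      hx hy)
  · obtain ⟨x, hxL, hxs⟩ := hA.inter_nonempty L hL _ (hv.side_mem_lines hs)
    exact ⟨_, (hP _).2 ⟨x, hxL, rfl⟩, mem_trace.2 ⟨hs, hxs⟩⟩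

theorem IsSmallPlane.collin_of_trace_eq {x' y' z z' : X} (hA : IsSmallPlane A k) (hv : IsFrame A v)
    (hw : IsFrame A w) (hx : trace A v x = trace A w x') (hy : trace A v y = trace A w y')
    (hz : trace A v z = trace A w z') (h : Collin A x y z) : Collin A x' y' z' := by
  have := hv.nontrivial
  have hxy : x' = y' ↔ x = y := by
    rw [← (hA.trace_injective hv).eq_iff (a := x), hx, hy, (hA.trace_injective hw).eq_iff]
  rcases eq_or_ne x' y' with hxy' | hxy'
  · exact collin_of_eq (.inl hxy')
  obtain ⟨L, hL, hxL, hyL, hzL⟩ := h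
  by_cases hLs : ∃ s ∈ pairs, side A v s = L
  · obtain ⟨s, hs, rfl⟩ := hLs
    have hmem {p p'} (hp : trace A v p = trace A w p') (hps : p ∈ side A v s) : p' ∈ side A w s :=
      (mem_trace.1 (hp ▸ mem_trace.2 ⟨hs, hps⟩)).2
    exact ⟨_, hw.side_mem_lines hs, hmem hx hxL, hmem hy hyL, hmem hz hzL⟩
  · push Not at hLs
    obtain ⟨M, hM, hxM, hyM⟩ := A.exists_line x' y' hxy'
    have hMs (s) (hs : s ∈ pairs) : side A w s ≠ M := by
      rintro rfl
      have hxs := mem_trace.1 (hx ▸ mem_trace.2 ⟨hs, hxM⟩)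
      have hys := mem_trace.1 (hy ▸ mem_trace.2 ⟨hs, hyM⟩)
      exact hLs s hs (line_unique (hxy.not.1 hxy') (hv.side_mem_lines hs) hL hxs.2 hys.2 hxL hyL)
    obtain ⟨P, hP, hPmem⟩ := hA.exists_isTransversal hv hL hLs
    obtain ⟨Q, hQ, hQmem⟩ := hA.exists_isTransversal hw hM hMs
    have hPQ : P = Q := by
      refine hP.eq_of_one_lt_card_inter hA.eq_or_eq hQ (Finset.one_lt_card.2
        ⟨trace A w x', ?_, trace A w y', ?_, (hA.trace_injective hw).ne hxy'⟩)
      · exact Finset.mem_inter.2 ⟨(hPmem _).2 ⟨x, hxL, hx⟩, (hQmem _).2 ⟨x', hxM, rfl⟩⟩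
      · exact Finset.mem_inter.2 ⟨(hPmem _).2 ⟨y, hyL, hy⟩, (hQmem _).2 ⟨y', hyM, rfl⟩⟩
    obtain ⟨z'', hzM, hz''⟩ := (hQmem _).1 (hPQ ▸ (hPmem _).2 ⟨z, hzL, hz⟩)
    exact ⟨M, hM, hxM, hyM, hA.trace_injective hw hz'' ▸ hzM⟩

theorem IsSmallPlane.exists_auto {f : X → X} {S : Set X} (hA : IsSmallPlane A k)
    (hv : IsFrame A v) (hf : IsPartialIso A f S) (hvS : ∀ i, v i ∈ S) :
    ∃ g, IsAuto A g ∧ Set.EqOn g f S := by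
  have hw : IsFrame A (f ∘ v) := hv.comp_of_isPartialIso hf hvS
  have hrange {v w : Fin 4 → X} (hv : IsFrame A v) (hw : IsFrame A w) (x : X) :
      trace A v x ∈ Set.range (trace A w) := by
    rw [hA.range_trace hw]
    exact hA.trace_mem_positions hv x
  choose g hg using hrange hv hw
  refine ⟨g, ⟨⟨fun x y h => ?_, fun y => ?_⟩, fun x y z => ⟨?_, ?_⟩⟩, fun x hx => ?_⟩
  · exact hA.trace_injective hv (by rw [← hg, ← hg, h])
  · obtain ⟨x, hx⟩ := hrange hw hv y
    exact ⟨x, hA.trace_injective hw ((hg x).trans hx)⟩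
  · exact hA.collin_of_trace_eq hv hw (hg x).symm (hg y).symm (hg z).symm
  · exact hA.collin_of_trace_eq hw hv (hg x) (hg y) (hg z)
  · refine hA.trace_injective hw ((hg x).trans (Finset.ext fun s => ?_))
    rw [mem_trace, mem_trace]
    refine and_congr_right fun hs => ?_
    obtain ⟨i, j, -, rfl⟩ := Finset.card_eq_two.1 (Finset.mem_powersetCard_univ.1 hs)
    rw [← collin_iff_mem_side, ← collin_iff_mem_side]
    exact hf.2 _ (hvS i) _ (hvS j) x hx

end SmallPlane

section Backward

variable {S L L' M : Set X} {f h : X → X} {k : ℕ} {v : Fin 4 → X} {c c' : X}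

theorem homogeneous_of_forall_perm
    (h : ∀ (g : Equiv.Perm X) (x y z : X), Collin A x y z ↔ Collin A (g x) (g y) (g z)) :
    Homogeneous A := by
  intro S hS f hf _
  obtain ⟨g, hg⟩ := exists_perm_eqOn hS hf
  exact ⟨g, ⟨g.bijective, h g⟩, hg⟩

theorem homogeneous_of_forall_encard_eq_two (h : ∀ L ∈ A.lines, L.encard = 2) :
    Homogeneous A := by
  have key (x y z) : Collin A x y z ↔ Nontrivial X ∧ (x = y ∨ y = z ∨ x = z) := by
    constructor
    · rintro ⟨L, hL, hx, hy, hz⟩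
      obtain ⟨p, q, hpq, rfl⟩ := Set.encard_eq_two.1 (h L hL)
      exact ⟨⟨p, q, hpq⟩, by grind⟩
    · rintro ⟨_, heq⟩
      exact collin_of_eq heq
  exact homogeneous_of_forall_perm fun g x y z => by simp only [key, g.injective.eq_iff]

theorem homogeneous_of_forall_collin (h : ∀ x y z, Collin A x y z) : Homogeneous A :=
  homogeneous_of_forall_perm fun _ _ _ _ => by simp only [h]

-- Take a line `L` containing as many points of `S` as possible. The line `M` through two points of
-- `S \ L` then satisfies `2 ≤ |S ∩ M \ L| ≤ |S ∩ L \ M|`.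
theorem exists_isFrame_or_exists_line (hS : S.Finite) (hS' : S.Nontrivial) :
    (∃ v, IsFrame A v ∧ ∀ i, v i ∈ S) ∨
      ∃ L ∈ A.lines, (S ∩ L).Nontrivial ∧ (S \ L).Subsingleton := by
  obtain ⟨x, hx, y, hy, hxy⟩ := hS'
  obtain ⟨K, hK, hxK, hyK⟩ := A.exists_line x y hxy
  obtain ⟨_, ⟨L, hL, rfl⟩, hmax⟩ := Set.exists_max_image ((S ∩ ·) '' A.lines) Set.encard
    (hS.finite_subsets.subset (by rintro _ ⟨M, -, rfl⟩; exact Set.inter_subset_left))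
    ⟨_, K, hK, rfl⟩
  rw [Set.forall_mem_image] at hmax
  refine or_iff_not_imp_right.2 fun hnot => ?_
  have hSK : (S ∩ K).Nontrivial := ⟨x, ⟨hx, hxK⟩, y, ⟨hy, hyK⟩, hxy⟩
  have hSL : (S ∩ L).Nontrivial := Set.one_lt_encard_iff_nontrivial.1 <|
    (Set.one_lt_encard_iff_nontrivial.2 hSK).trans_le (hmax hK)
  have hSL' : ¬ (S \ L).Subsingleton := fun hsub => hnot ⟨L, hL, hSL, hsub⟩
  obtain ⟨c, hc, d, hd, hcd⟩ := Set.not_subsingleton_iff.1 hSL'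
  obtain ⟨M, hM, hcM, hdM⟩ := A.exists_line c d hcd
  have hle := (Set.encard_le_encard_iff_encard_sdiff_le_encard_sdiff
    (hS.subset fun x hx => hx.1.1)).1 (hmax hM)
  have hSM : ((S ∩ M) \ (S ∩ L)).Nontrivial :=
    ⟨c, ⟨⟨hc.1, hcM⟩, fun h => hc.2 h.2⟩, d, ⟨⟨hd.1, hdM⟩, fun h => hd.2 h.2⟩, hcd⟩
  obtain ⟨a, ha, b, hb, hab⟩ := Set.one_lt_encard_iff_nontrivial.1 <|
    (Set.one_lt_encard_iff_nontrivial.2 hSM).trans_le hle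
  refine ⟨_, isFrame_of_mem_diff hL hM ⟨ha.1.2, fun h => ha.2 ⟨ha.1.1, h⟩⟩
    ⟨hb.1.2, fun h => hb.2 ⟨hb.1.1, h⟩⟩ ⟨hcM, hc.2⟩ ⟨hdM, hd.2⟩ hab hcd, fun i => ?_⟩
  fin_cases i
  exacts [ha.1.1, hb.1.1, hc.1, hd.1]

theorem IsSmallPlane.two_lt_encard (hA : IsSmallPlane A k) (hL : L ∈ A.lines) : 2 < L.encard := by
  rw [hA.encard_eq L hL]
  rcases hA.eq_or_eq with rfl | rfl <;> norm_num

theorem IsSmallPlane.exists_mem_notMem_ne (hA : IsSmallPlane A k) (hL : L ∈ A.lines)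
    (hM : M ∈ A.lines) (hLM : L ≠ M) (c : X) : ∃ d ∈ M, d ∉ L ∧ d ≠ c := by
  obtain ⟨e, heL, heM⟩ := hA.inter_nonempty L hL M hM
  obtain ⟨d, hd, hdc, hde⟩ := exists_mem_ne_ne (hA.two_lt_encard hM) c e
  exact ⟨d, hd, fun hdL => hde (A.inter_subsingleton L hL M hM hLM ⟨hdL, hd⟩ ⟨heL, heM⟩), hdc⟩

-- A third point `d` of the line joining `c` to a point `e` of `L` completes `c` and two points of
-- `L` to a frame; its image is chosen on the line joining `c'` to `h e`.
theorem IsSmallPlane.exists_auto_of_injOn (hA : IsSmallPlane A k) (hL : L ∈ A.lines)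
    (hL' : L' ∈ A.lines) (hc : c ∉ L) (hc' : c' ∉ L') (hh : Set.InjOn h L)
    (hhL : Set.MapsTo h L L') : ∃ g, IsAuto A g ∧ g c = c' ∧ Set.EqOn g h L := by
  classical
  obtain ⟨e, he, -⟩ := exists_pair_mem hL
  obtain ⟨M, hM, hcM, hLM⟩ := exists_line_through_of_notMem hL hc he
  obtain ⟨M', hM', hcM', hLM'⟩ := exists_line_through_of_notMem hL' hc' (hhL he)
  obtain ⟨d, hdM, hd, hdc⟩ := hA.exists_mem_notMem_ne hL hM (fun h => hc (h ▸ hcM)) c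
  obtain ⟨d', hdM', hd', hdc'⟩ := hA.exists_mem_notMem_ne hL' hM' (fun h => hc' (h ▸ hcM')) c'
  obtain ⟨a, ha, b, hb, hab, hae, hbe⟩ := exists_pair_mem_ne (hA.two_lt_encard hL) e
  have hv : IsFrame A ![a, b, c, d] := isFrame_of_mem_diff hL hM ⟨ha, (hLM a ha).not.2 hae⟩
    ⟨hb, (hLM b hb).not.2 hbe⟩ ⟨hcM, hc⟩ ⟨hdM, hd⟩ hab hdc.symm
  let f : X → X := Function.update (Function.update h d d') c c'
  have hfc : f c = c' := Function.update_self ..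
  have hfd : f d = d' := by simp [f, hdc]
  have hfh : Set.EqOn f h L := fun x hx => by
    simp [f, ne_of_mem_of_not_mem hx hc, ne_of_mem_of_not_mem hx hd]
  have hf : IsPartialIso A f (L ∪ {c, d}) := by
    refine isPartialIso_union_pair hL hM hL' hM' (hh.congr hfh.symm) (hhL.congr hfh.symm)
      (fun x hx => ?_) ⟨hcM, hc⟩ ⟨hdM, hd⟩ (hfc ▸ ⟨hcM', hc'⟩) (hfd ▸ ⟨hdM', hd'⟩)
      (by rw [hfc, hfd]; exact hdc'.symm)
    rw [hfh hx, hLM' _ (hhL hx), hLM x hx, hh.eq_iff hx he]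
  obtain ⟨g, hg, hgf⟩ := hA.exists_auto hv hf fun i => by fin_cases i <;> simp [ha, hb]
  exact ⟨g, hg, (hgf (by simp)).trans hfc, fun x hx => (hgf (.inl hx)).trans (hfh hx)⟩

theorem IsSmallPlane.exists_auto_of_nontrivial (hA : IsSmallPlane A k) (hv : IsFrame A v)
    (hS : S.Finite) (hS' : S.Nontrivial) (hf : IsPartialIso A f S) :
    ∃ g, IsAuto A g ∧ Set.EqOn g f S := by
  rcases exists_isFrame_or_exists_line (A := A) hS hS' with ⟨w, hw, hwS⟩ | ⟨L, hL, hSL, hsub⟩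
  · exact hA.exists_auto hw hf hwS
  obtain ⟨L', hL', hfL⟩ := hf.exists_image_line hL hSL
  obtain ⟨h, hh, hhL, hhf⟩ := exists_injOn_eqOn (u := L')
    (Set.finite_of_encard_eq_coe (hA.encard_eq L hL))
    (by rw [hA.encard_eq L hL, hA.encard_eq L' hL']) Set.inter_subset_right
    (hf.1.mono Set.inter_subset_left) (fun x hx => (hfL x hx.1).2 hx.2)
  obtain ⟨c, c', hc, hc', hcS⟩ : ∃ c c', c ∉ L ∧ c' ∉ L' ∧ ∀ x ∈ S \ L, x = c ∧ f x = c' := by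
    rcases hsub.eq_empty_or_singleton with hempty | ⟨c, hc⟩
    · obtain ⟨c, hc⟩ := hv.exists_notMem hL
      obtain ⟨c', hc'⟩ := hv.exists_notMem hL'
      exact ⟨c, c', hc, hc', by simp [hempty]⟩
    · have hcS : c ∈ S \ L := hc ▸ Set.mem_singleton c
      exact ⟨c, f c, hcS.2, (hfL c hcS.1).not.2 hcS.2, by simp [hc]⟩
  obtain ⟨g, hg, hgc, hgL⟩ := hA.exists_auto_of_injOn hL hL' hc hc' hh hhL
  refine ⟨g, hg, fun x hx => ?_⟩
  by_cases hxL : x ∈ L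
  · rw [hgL hxL, hhf ⟨hx, hxL⟩]
  · obtain ⟨rfl, hfx⟩ := hcS x ⟨hx, hxL⟩
    rw [hgc, hfx]

theorem IsSmallPlane.homogeneous (hA : IsSmallPlane A k) (hfour : FourIndep A) :
    Homogeneous A := by
  obtain ⟨v, hv⟩ := fourIndep_iff_exists_isFrame.1 hfour
  have := hv.nontrivial
  intro S hS f hf hcol
  rcases S.subsingleton_or_nontrivial with hsub | hnt
  · obtain ⟨x, hx⟩ : ∃ x, S ⊆ {x} := by
      rcases hsub.eq_empty_or_singleton with rfl | ⟨x, rfl⟩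
      exacts [⟨v 0, Set.empty_subset _⟩, ⟨x, subset_rfl⟩]
    obtain ⟨y, hyx⟩ := exists_ne x
    obtain ⟨p, hp⟩ := exists_perm_eqOn hS hf
    obtain ⟨g, hg, hgp⟩ := hA.exists_auto_of_nontrivial hv (S := {x, y}) (Set.toFinite _)
      (Set.nontrivial_pair hyx.symm) (isPartialIso_pair p.injective x y)
    exact ⟨g, hg, fun z hz => (hgp (.inl (hx hz))).trans (hp hz)⟩
  · exact hA.exists_auto_of_nontrivial hv hS hnt ⟨hf, hcol⟩

end Backward

section Classification

theorem card_positions_three : (positions 3).card = 7 := by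
  decide

theorem card_positions_four : (positions 4).card = 13 := by
  decide

theorem _root_.IsFano.isSmallPlane (hA : IsFano A) : IsSmallPlane A 3 :=
  ⟨.inl rfl, hA.1.1, hA.2.1⟩

theorem _root_.IsPG2_3.isSmallPlane (hA : IsPG2_3 A) : IsSmallPlane A 4 :=
  ⟨.inr rfl, hA.1.1, hA.2.1⟩

theorem IsSmallPlane.isFano_or_isPG2_3 {k : ℕ} (hA : IsSmallPlane A k) (hfour : FourIndep A) :
    IsFano A ∨ IsPG2_3 A := by
  obtain ⟨v, hv⟩ := fourIndep_iff_exists_isFrame.1 hfour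
  have huniv := hA.encard_univ hv
  rcases hA.eq_or_eq with rfl | rfl
  · rw [card_positions_three] at huniv
    exact .inl ⟨⟨hA.inter_nonempty, hfour⟩, hA.encard_eq, huniv⟩
  · rw [card_positions_four] at huniv
    exact .inr ⟨⟨hA.inter_nonempty, hfour⟩, hA.encard_eq, huniv⟩

theorem _root_.Homogeneous.isFano_or_isPG2_3 (H : Homogeneous A)
    (hcard : ∀ L ∈ A.lines, 2 < L.encard) (hA : IsProjPlane A) : IsFano A ∨ IsPG2_3 A := by
  obtain ⟨L, hL, hL₄⟩ := H.exists_encard_le_four hA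
  obtain ⟨k, hk⟩ := ENat.ne_top_iff_exists.1 (ne_top_of_le_ne_top (ENat.natCast_ne_top 4) hL₄)
  have hL₂ := hcard L hL
  rw [← hk] at hL₂ hL₄
  norm_cast at hL₂ hL₄
  refine IsSmallPlane.isFano_or_isPG2_3 (k := k) ⟨by lia, hA.1, fun M hM => ?_⟩ hA.2
  rw [H.encard_eq_encard hM hL, hk]

theorem _root_.Homogeneous.forall_encard_eq_two_or_forall_two_lt (H : Homogeneous A) :
    (∀ L ∈ A.lines, L.encard = 2) ∨ ∀ L ∈ A.lines, 2 < L.encard := by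
  by_contra! ⟨⟨L, hL, hL₂⟩, M, hM, hM₂⟩
  exact hL₂ (((H.encard_eq_encard hL hM).trans_le hM₂).antisymm (A.two_le L hL))

end Classification

end LinSpace

/-- The homogeneous linear spaces are exactly: the trivial spaces, the single
lines, the Fano plane PG(2,2) and the projective plane PG(2,3). -/
theorem stmt9 {X : Type u} (A : LinSpace X) :
    Homogeneous A ↔
      ((∀ L ∈ A.lines, L.encard = 2) ∨ (∀ x y z : X, Collin A x y z) ∨
        IsFano A ∨ IsPG2_3 A) := by
  constructor
  · intro H
    rcases H.forall_encard_eq_two_or_forall_two_lt with htwo | hcard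
    · exact .inl htwo
    rcases A.lines.eq_empty_or_nonempty with hempty | ⟨L, hL⟩
    · exact .inl (by simp [hempty])
    by_cases hcol : ∀ x y z, Collin A x y z
    · exact .inr (.inl hcol)
    exact .inr (.inr (H.isFano_or_isPG2_3 hcard (H.isProjPlane hcard hcol hL)))
  · rintro (htwo | hcol | hA | hA)
    · exact LinSpace.homogeneous_of_forall_encard_eq_two htwo
    · exact LinSpace.homogeneous_of_forall_collin hcol
    · exact hA.isSmallPlane.homogeneous hA.1.2
    · exact hA.isSmallPlane.homogeneous hA.1.2
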